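/- Let (C, ⊗, I) be a monoidal category such that every object of C has a strong left dual and a strong right dual, and such that for every object C the functors C ⊗ − : C → C and − ⊗ C : C → C preserve monomorphisms. Then C is a Serre category: for any objects C, D of C such that C ⊗ D is a semisimple object, both C and D are semisimple objects of C. -/

import Mathlib

open CategoryTheory MonoidalCategory

/-- An object `X` of a category is *semisimple* if every monomorphism into `X` is a
split monomorphism. -/
def IsSemisimpleObj {C : Type*} [Category C] (X : C) : Prop :=
  ∀ ⦃Z : C⦄ (f : Z ⟶ X), Mono f → IsSplitMono f

/-- A monoidal category is a *Serre category* if whenever `X ⊗ Y` is a semisimple object,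
both `X` and `Y` are semisimple objects. -/
def IsSerreCategory (C : Type*) [Category C] [MonoidalCategory C] : Prop :=
  ∀ (X Y : C), IsSemisimpleObj (X ⊗ Y) → IsSemisimpleObj X ∧ IsSemisimpleObj Y

/-! A split mono `𝟙_ C ⟶ Y ⊗ W` gives a natural transformation from the identity to
`(- ⊗ Y) ⊗ W` with split monic components. For any such `η : 𝟭 C ⟶ F ⋙ G`, the functor `F`
reflects split monos: if `F.map f` is split monic, so is `η.app X ≫ G.map (F.map f) = f ≫ η.app Y`,
hence so is its first factor `f`. The other tensor factor is handled symmetrically. -/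

section Reflection

variable {C D : Type*} [Category C] [Category D]

theorem isSplitMono_of_isSplitMono_comp {X Y Z : C} (f : X ⟶ Y) (g : Y ⟶ Z)
    [IsSplitMono (f ≫ g)] : IsSplitMono f :=
  .mk' ⟨g ≫ retraction (f ≫ g), by rw [← Category.assoc, IsSplitMono.id]⟩

theorem isSplitMono_of_isSplitMono_map {F : C ⥤ D} {G : D ⥤ C} (η : 𝟭 C ⟶ F ⋙ G) {X Y : C}
    (f : X ⟶ Y) [IsSplitMono (η.app X)] [IsSplitMono (F.map f)] : IsSplitMono f := by
  have naturality : f ≫ η.app Y = η.app X ≫ G.map (F.map f) := η.naturality f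
  have : IsSplitMono (f ≫ η.app Y) := by
    rw [naturality]
    infer_instance
  exact isSplitMono_of_isSplitMono_comp f (η.app Y)

theorem IsSemisimpleObj.of_obj {F : C ⥤ D} {G : D ⥤ C} [F.PreservesMonomorphisms]
    (η : 𝟭 C ⟶ F ⋙ G) [∀ Z, IsSplitMono (η.app Z)] {X : C} (hX : IsSemisimpleObj (F.obj X)) :
    IsSemisimpleObj X := by
  intro Z f _
  have : IsSplitMono (F.map f) := hX (F.map f) inferInstance
  exact isSplitMono_of_isSplitMono_map η f

end Reflection

section Monoidal

variable {C : Type*} [Category C] [MonoidalCategory C] {V W X Y : C}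

/-- The natural transformation `Z ⟶ (Z ⊗ Y) ⊗ W` induced by a morphism `𝟙_ C ⟶ Y ⊗ W`. When
`W` is a right dual of `Y` with this coevaluation, it is the unit of `- ⊗ Y ⊣ - ⊗ W`. -/
def tensorRightUnit (i : 𝟙_ C ⟶ Y ⊗ W) : 𝟭 C ⟶ tensorRight Y ⋙ tensorRight W :=
  (rightUnitorNatIso C).inv ≫ (tensoringRight C).map i ≫ (tensorRightTensor Y W).hom

/-- The natural transformation `Z ⟶ V ⊗ (X ⊗ Z)` induced by a morphism `𝟙_ C ⟶ V ⊗ X`. When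
`V` is a left dual of `X` with this coevaluation, it is the unit of `X ⊗ - ⊣ V ⊗ -`. -/
def tensorLeftUnit (i : 𝟙_ C ⟶ V ⊗ X) : 𝟭 C ⟶ tensorLeft X ⋙ tensorLeft V :=
  (leftUnitorNatIso C).inv ≫ (tensoringLeft C).map i ≫ (tensorLeftTensor V X).hom

instance isSplitMono_tensorRightUnit (i : 𝟙_ C ⟶ Y ⊗ W) [IsSplitMono i] :
    IsSplitMono (tensorRightUnit i) := by
  unfold tensorRightUnit
  infer_instance

instance isSplitMono_tensorLeftUnit (i : 𝟙_ C ⟶ V ⊗ X) [IsSplitMono i] :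
    IsSplitMono (tensorLeftUnit i) := by
  unfold tensorLeftUnit
  infer_instance

theorem IsSemisimpleObj.left_of_tensor (i : 𝟙_ C ⟶ Y ⊗ W) [IsSplitMono i]
    [(tensorRight Y).PreservesMonomorphisms] (hXY : IsSemisimpleObj (X ⊗ Y)) :
    IsSemisimpleObj X :=
  .of_obj (tensorRightUnit i) hXY

theorem IsSemisimpleObj.right_of_tensor (i : 𝟙_ C ⟶ V ⊗ X) [IsSplitMono i]
    [(tensorLeft X).PreservesMonomorphisms] (hXY : IsSemisimpleObj (X ⊗ Y)) :
    IsSemisimpleObj Y :=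
  .of_obj (tensorLeftUnit i) hXY

end Monoidal

/-- **Serre theorem.** If in a monoidal category every object has a strong left dual and a
strong right dual (i.e. for every `D` there are split monos `I ⟶ D ⊗ D*` and
`I ⟶ D* ⊗ D`), and tensoring on either side by any object preserves monomorphisms, then
the category is a Serre category. -/
theorem isSerreCategory_of_strong_duals {C : Type*} [Category C] [MonoidalCategory C]
    (hrdual : ∀ D : C, ∃ (D' : C) (i : 𝟙_ C ⟶ D ⊗ D'), IsSplitMono i)
    (hldual : ∀ D : C, ∃ (D' : C) (i : 𝟙_ C ⟶ D' ⊗ D), IsSplitMono i)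
    (hmonoR : ∀ (D : C) ⦃A B : C⦄ (f : A ⟶ B), Mono f → Mono (f ▷ D))
    (hmonoL : ∀ (D : C) ⦃A B : C⦄ (f : A ⟶ B), Mono f → Mono (D ◁ f)) :
    IsSerreCategory C := by
  intro X Y hXY
  obtain ⟨W, i, hi⟩ := hrdual Y
  obtain ⟨V, j, hj⟩ := hldual X
  have : (tensorRight Y).PreservesMonomorphisms := ⟨fun f hf ↦ hmonoR Y f hf⟩
  have : (tensorLeft X).PreservesMonomorphisms := ⟨fun f hf ↦ hmonoL X f hf⟩
  exact ⟨hXY.left_of_tensor i, hXY.right_of_tensor j⟩
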